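/- Under the hypotheses of the preceding setting — Q an n×n invertible Hermitian complex matrix with spectrum in [−b, −a] ∪ [a, b] (0 < a ≤ b), v ∈ ℂⁿ nonzero, ω₁, …, ω_m ≥ 0, 0 < τ₁ ≤ … ≤ τ_m with |sign(t) − Σᵢ ωᵢ t/(t² + τᵢ)| ≤ ε/2 on [−b, −a] ∪ [a, b], and x_k = Σᵢ ωᵢ Q V̂(T̂ + τᵢI)^{−1} e₁ ‖v‖₂ the k-step multishift-CG/PFE approximation built from a Lanczos relation Q²V̂ = V̂T̂ + β̂ v̂ e_kᵀ (V̂ with orthonormal columns, first column v/‖v‖₂, T̂ real symmetric tridiagonal with positive subdiagonal, v̂ a unit vector orthogonal to the columns of V̂) — if in addition the first residual satisfies ‖r_k^1‖₂ = ‖v − (Q² + τ₁I)V̂(T̂+τ₁I)^{−1}e₁‖v‖₂‖₂ ≤ ε/(2 + ε), with 0 < ε ≤ 2, then ‖sign(Q)v − x_k‖₂ ≤ ε. -/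

import Mathlib

/-!
In an eigenbasis of `Q` everything is diagonal. By the Lanczos relation the residual of the `i`-th
shifted system is `r_i = -βh (y_i)_k vh` with `y_i = (T + τ_i)⁻¹ e₁`, so all residuals are collinear.
By Cramer's rule `(y_i)_k = c / det (T + τ_i)`, where the cofactor `c` is the determinant of a
triangular matrix whose diagonal is the subdiagonal of `T`, hence does not depend on the shift
(`adjugate_corner_const`). As `T = Vᴴ Q² V` is positive semidefinite, `det (T + τ)` is positive and
increasing in `τ > 0` (`det_shift`), so `r_i = ρ_i r_1` with `ρ_i ∈ [0, 1]`.

If `d` and `s` are the eigenbasis coordinates of `v` and `r_1`, the error has coordinates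
`(sign λ - ∑ ω_i λ / (λ² + τ_i)) d + (∑ ω_i ρ_i λ / (λ² + τ_i)) s`. The first factor is at most
`ε / 2` in modulus; the second is at most `∑ ω_i |λ| / (λ² + τ_i) ≤ 1 + ε / 2`. Hence the error is
at most `ε / 2 + (1 + ε / 2) ‖r_1‖ ≤ ε`.
-/

open Matrix Polynomial

/-- The Euclidean (l2) norm on `ℂⁿ`. -/
noncomputable def e2norm {n : ℕ} (x : Fin n → ℂ) : ℝ :=
  Real.sqrt (∑ i, ‖x i‖ ^ 2)

lemma e2norm_eq_norm {n : ℕ} (x : Fin n → ℂ) : e2norm x = ‖WithLp.toLp 2 x‖ := by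
  rw [EuclideanSpace.norm_eq]; rfl

lemma e2norm_add_le {n : ℕ} (x y : Fin n → ℂ) : e2norm (x + y) ≤ e2norm x + e2norm y := by
  simp only [e2norm_eq_norm, WithLp.toLp_add]
  exact norm_add_le _ _

lemma e2norm_le_of_forall {n : ℕ} {x y : Fin n → ℂ} {A : ℝ} (hA : 0 ≤ A)
    (h : ∀ j, ‖y j‖ ≤ A * ‖x j‖) : e2norm y ≤ A * e2norm x := by
  unfold e2norm
  rw [← Real.sqrt_sq hA, ← Real.sqrt_mul (sq_nonneg A), Finset.mul_sum]
  apply Real.sqrt_le_sqrt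
  apply Finset.sum_le_sum
  intro j _
  rw [← mul_pow]
  exact pow_le_pow_left₀ (norm_nonneg _) (h j) 2

lemma e2norm_sq {n : ℕ} (x : Fin n → ℂ) : ((e2norm x ^ 2 : ℝ) : ℂ) = star x ⬝ᵥ x := by
  unfold e2norm
  rw [Real.sq_sqrt (Finset.sum_nonneg fun i _ => sq_nonneg _)]
  simp [dotProduct, Complex.conj_mul']

lemma e2norm_isometry {n : ℕ} {W : Matrix (Fin n) (Fin n) ℂ} (hW : Wᴴ * W = 1)
    (x : Fin n → ℂ) : e2norm (W *ᵥ x) = e2norm x := by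
  have h : e2norm (W *ᵥ x) ^ 2 = e2norm x ^ 2 := by
    apply Complex.ofReal_injective
    rw [e2norm_sq, e2norm_sq, star_mulVec, ← dotProduct_mulVec, mulVec_mulVec, hW, one_mulVec]
  exact (sq_eq_sq₀ (Real.sqrt_nonneg _) (Real.sqrt_nonneg _)).mp h

/-- Deleting the first row and the last column of `T + σ` leaves an upper triangular matrix whose
diagonal is the subdiagonal of `T`, so the corresponding cofactor does not depend on `σ`. -/
lemma adjugate_corner_const {k : ℕ} (hk : 0 < k) (T : Matrix (Fin k) (Fin k) ℝ)
    (hTtri : ∀ i j : Fin k, 1 < ((i : ℤ) - (j : ℤ)).natAbs → T i j = 0) :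
    ∃ c : ℝ, ∀ σ : ℝ, (T + σ • (1 : Matrix (Fin k) (Fin k) ℝ)).adjugate
      ⟨k - 1, Nat.sub_lt hk one_pos⟩ ⟨0, hk⟩ = c := by
  obtain ⟨l, rfl⟩ : ∃ l, k = l + 1 := ⟨k - 1, by omega⟩
  refine ⟨(-1) ^ l * ∏ i : Fin l, T i.succ i.castSucc, fun σ => ?_⟩
  have h1 : (⟨l + 1 - 1, Nat.sub_lt hk one_pos⟩ : Fin (l + 1)) = Fin.last l := rfl
  have h0 : (⟨0, hk⟩ : Fin (l + 1)) = 0 := rfl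
  rw [h1, h0, adjugate_fin_succ_eq_det_submatrix, det_of_isUpperTriangular]
  · have hne : ∀ i : Fin l, i.succ ≠ i.castSucc := fun i h => by
      have := congrArg Fin.val h; simp at this
    simp [one_apply, hne]
  · intro i j hij
    have hij' : (j : ℕ) < i := hij
    have hne : i.succ ≠ j.castSucc := fun h => by
      have := congrArg Fin.val h; simp at this; omega
    have := hTtri i.succ j.castSucc (by simp; omega)
    simp [this, hne]

open scoped ComplexOrder in
/-- For a real matrix that is positive semidefinite over `ℂ`, `det (T + σ)` is the product of the
`μ_j + σ` with `μ_j ≥ 0`, hence positive and increasing for `σ > 0`. -/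
lemma det_shift {k : ℕ} (T : Matrix (Fin k) (Fin k) ℝ)
    (hT : (T.map (algebraMap ℝ ℂ)).PosSemidef) :
    (∀ σ : ℝ, 0 < σ → 0 < (T + σ • (1 : Matrix (Fin k) (Fin k) ℝ)).det) ∧
    ∀ σ σ' : ℝ, 0 < σ → σ ≤ σ' → (T + σ • (1 : Matrix (Fin k) (Fin k) ℝ)).det ≤
      (T + σ' • (1 : Matrix (Fin k) (Fin k) ℝ)).det := by
  have key : ∀ σ : ℝ, (T + σ • (1 : Matrix (Fin k) (Fin k) ℝ)).det =
      ∏ j, (hT.1.eigenvalues j + σ) := by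
    intro σ
    apply Complex.ofReal_injective
    have h1 := congrArg (Polynomial.eval (-(σ : ℂ))) hT.1.charpoly_eq
    rw [eval_charpoly, eval_prod] at h1
    have h2 : scalar (Fin k) (-(σ : ℂ)) - T.map (algebraMap ℝ ℂ) =
        -((T + σ • (1 : Matrix (Fin k) (Fin k) ℝ)).map (algebraMap ℝ ℂ)) := by
      ext i j
      by_cases hij : i = j
      · subst hij; simp; ring
      · simp [hij]
    have h3 : ∀ j, eval (-(σ : ℂ)) (X - C ((hT.1.eigenvalues j : ℝ) : ℂ)) =
        (-1) * ((hT.1.eigenvalues j + σ : ℝ) : ℂ) := by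
      intro j; simp; ring
    have h4 : ((T + σ • (1 : Matrix (Fin k) (Fin k) ℝ)).map (algebraMap ℝ ℂ)).det =
        ((T + σ • (1 : Matrix (Fin k) (Fin k) ℝ)).det : ℂ) :=
      (RingHom.map_det (algebraMap ℝ ℂ) _).symm
    rw [h2, det_neg, h4] at h1
    have h5 : ∏ j, eval (-(σ : ℂ)) (X - C ((hT.1.eigenvalues j : ℝ) : ℂ)) =
        (-1) ^ k * ∏ j, ((hT.1.eigenvalues j + σ : ℝ) : ℂ) := by
      simp_rw [h3]
      rw [Finset.prod_mul_distrib]; simp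
    have h6 := h1.trans h5
    rw [Fintype.card_fin] at h6
    have h7 := mul_left_cancel₀ (pow_ne_zero k (neg_ne_zero.mpr one_ne_zero)) h6
    rw [h7, Complex.ofReal_prod]
  have hnn := hT.eigenvalues_nonneg
  refine ⟨fun σ hσ => ?_, fun σ σ' hσ hσ' => ?_⟩
  · rw [key]
    exact Finset.prod_pos fun j _ => by linarith [hnn j]
  · rw [key, key]
    exact Finset.prod_le_prod (fun j _ => by linarith [hnn j]) fun j _ => by linarith

open scoped ComplexOrder in
/-- Since `T = Vᴴ Q² V = (Q V)ᴴ (Q V)`, the Lanczos matrix is positive semidefinite. -/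
lemma lanczos_posSemidef {n k : ℕ} {Q : Matrix (Fin n) (Fin n) ℂ} (hQ : Q.IsHermitian)
    {V : Matrix (Fin n) (Fin k) ℂ} (hVorth : Vᴴ * V = 1) {S : Matrix (Fin k) (Fin k) ℂ}
    {β : ℂ} {vh : Fin n → ℂ} (hvhV : star vh ᵥ* V = 0) {e : Fin k → ℂ}
    (hrel : Q ^ 2 * V = V * S + β • vecMulVec vh e) : S.PosSemidef := by
  have h0 : Vᴴ *ᵥ vh = 0 := by
    have := congrArg star hvhV
    rwa [star_vecMul, star_star, star_zero] at this
  have h : S = (Q * V)ᴴ * (Q * V) := by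
    have h1 : Vᴴ * (Q ^ 2 * V) = S := by
      rw [hrel, Matrix.mul_add, ← Matrix.mul_assoc, hVorth, Matrix.one_mul, Matrix.mul_smul,
        mul_vecMulVec, h0]
      simp
    rw [← h1, conjTranspose_mul, hQ.eq, pow_two]
    simp only [Matrix.mul_assoc]
  rw [h]
  exact posSemidef_conjTranspose_mul_self _

/-- The residual of a shifted Galerkin solution `V y` is a multiple of the next Lanczos vector. -/
lemma residual_eq {n k : ℕ} {Q : Matrix (Fin n) (Fin n) ℂ}
    {V : Matrix (Fin n) (Fin k) ℂ} {S : Matrix (Fin k) (Fin k) ℂ}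
    {β : ℂ} {vh v : Fin n → ℂ} {e e1 : Fin k → ℂ}
    (hrel : Q ^ 2 * V = V * S + β • vecMulVec vh e) (hV1 : V *ᵥ e1 = v) {σ : ℂ} {y : Fin k → ℂ}
    (hy : (S + σ • 1) *ᵥ y = e1) :
    v - (Q ^ 2 + σ • 1) *ᵥ (V *ᵥ y) = -((β * (e ⬝ᵥ y)) • vh) := by
  have h1 : (Q ^ 2 + σ • 1) *ᵥ (V *ᵥ y) = V *ᵥ ((S + σ • 1) *ᵥ y) + (β * (e ⬝ᵥ y)) • vh := by
    rw [add_mulVec, mulVec_mulVec, hrel, add_mulVec, add_mulVec, mulVec_add, ← mulVec_mulVec,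
      smul_mulVec, smul_mulVec, smul_mulVec, one_mulVec, one_mulVec, mulVec_smul, vecMulVec_mulVec]
    ext j
    simp
    ring
  rw [h1, hy, hV1]
  simp

/-- The functional calculus acts diagonally in eigenbasis coordinates. -/
lemma cfc_coord {n : ℕ} {Q : Matrix (Fin n) (Fin n) ℂ} (hQ : Q.IsHermitian) (f : ℝ → ℝ)
    (x : Fin n → ℂ) (j : Fin n) :
    ((hQ.eigenvectorUnitary : Matrix (Fin n) (Fin n) ℂ)ᴴ *ᵥ (hQ.cfc f *ᵥ x)) j =
      (f (hQ.eigenvalues j) : ℂ) *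
        ((hQ.eigenvectorUnitary : Matrix (Fin n) (Fin n) ℂ)ᴴ *ᵥ x) j := by
  have hU : (hQ.eigenvectorUnitary : Matrix (Fin n) (Fin n) ℂ)ᴴ * hQ.eigenvectorUnitary = 1 :=
    Unitary.coe_star_mul_self _
  rw [IsHermitian.cfc, Unitary.conjStarAlgAut_apply, mulVec_mulVec, Matrix.mul_assoc,
    ← Matrix.mul_assoc, hU, Matrix.one_mul, ← mulVec_mulVec, mulVec_diagonal]
  rfl

lemma mulVec_coord {n : ℕ} {Q : Matrix (Fin n) (Fin n) ℂ} (hQ : Q.IsHermitian)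
    (x : Fin n → ℂ) (j : Fin n) :
    ((hQ.eigenvectorUnitary : Matrix (Fin n) (Fin n) ℂ)ᴴ *ᵥ (Q *ᵥ x)) j =
      (hQ.eigenvalues j : ℂ) *
        ((hQ.eigenvectorUnitary : Matrix (Fin n) (Fin n) ℂ)ᴴ *ᵥ x) j := by
  have h : Q = hQ.cfc id := hQ.spectral_theorem
  have hx : Q *ᵥ x = hQ.cfc id *ᵥ x := congrArg (· *ᵥ x) h
  rw [hx]
  exact cfc_coord hQ id x j

/-- Weights `ρ_i ∈ [0, 1]` only decrease the modulus of the partial fraction sum, whose terms all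
have the sign of `t`; without weights it is within `ε / 2` of `sign t`. -/
lemma weighted_sum_le {m : ℕ} {ω τ ρ : Fin m → ℝ} (hω : ∀ i, 0 ≤ ω i) (hτpos : ∀ i, 0 < τ i)
    (hρ0 : ∀ i, 0 ≤ ρ i) (hρ1 : ∀ i, ρ i ≤ 1) {ε t : ℝ}
    (h : |Real.sign t - ∑ i, ω i * (t / (t ^ 2 + τ i))| ≤ ε / 2) :
    |∑ i, ω i * ρ i * (t / (t ^ 2 + τ i))| ≤ 1 + ε / 2 := by
  have hden : ∀ i, 0 < t ^ 2 + τ i := fun i => by have := hτpos i; positivity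
  have habs : |∑ i, ω i * (t / (t ^ 2 + τ i))| = ∑ i, ω i * (|t| / (t ^ 2 + τ i)) := by
    have hsum : ∑ i, ω i * (t / (t ^ 2 + τ i)) = t * ∑ i, ω i / (t ^ 2 + τ i) := by
      rw [Finset.mul_sum]; exact Finset.sum_congr rfl fun i _ => by ring
    have hsum' : ∑ i, ω i * (|t| / (t ^ 2 + τ i)) = |t| * ∑ i, ω i / (t ^ 2 + τ i) := by
      rw [Finset.mul_sum]; exact Finset.sum_congr rfl fun i _ => by ring
    rw [hsum, hsum', abs_mul, abs_of_nonneg (a := ∑ i, ω i / (t ^ 2 + τ i))]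
    exact Finset.sum_nonneg fun i _ => div_nonneg (hω i) (hden i).le
  have hsign : |Real.sign t| ≤ 1 := by
    rcases Real.sign_apply_eq t with h | h | h <;> rw [h] <;> norm_num
  have htri : |∑ i, ω i * (t / (t ^ 2 + τ i))| ≤ 1 + ε / 2 := by
    rw [abs_le] at *
    constructor <;> linarith [h.1, h.2, hsign.1, hsign.2]
  refine le_trans ?_ (habs ▸ htri)
  refine (Finset.abs_sum_le_sum_abs _ _).trans (Finset.sum_le_sum fun i _ => ?_)
  rw [abs_mul, abs_mul, abs_div, abs_of_nonneg (hω i), abs_of_nonneg (hρ0 i), abs_of_pos (hden i)]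
  have : 0 ≤ |t| / (t ^ 2 + τ i) := div_nonneg (abs_nonneg _) (hden i).le
  gcongr
  exact mul_le_of_le_one_right (hω i) (hρ1 i)

/-- Termination criterion for the multishift-CG / PFE method: under the
hypotheses of the multishift-CG setting (rational approximation
`r(t) = ∑ᵢ ωᵢ t/(t² + τᵢ)` with `|sign(t) - r(t)| ≤ ε/2` on `[-b,-a] ∪ [a,b] ⊇ spec(Q)`,
`ωᵢ ≥ 0`, `0 < τ₁ ≤ … ≤ τ_m`, Lanczos relation `Q² V̂ = V̂ T̂ + β̂ v̂ e_kᵀ` for the normalized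
vector `v`, iterates `x_k = ∑ᵢ ωᵢ Q V̂ (T̂ + τᵢ I)⁻¹ e₁ ‖v‖₂`), if the first residual
satisfies `‖r_k^1‖₂ ≤ ε/(2 + ε)` with `0 < ε ≤ 2`, then `‖sign(Q)v − x_k‖₂ ≤ ε`. -/
theorem multishift_cg_pfe_termination {n k m : ℕ} (hk : 0 < k) (hm : 0 < m)
    (Q : Matrix (Fin n) (Fin n) ℂ) (hQ : Q.IsHermitian) (hQinv : IsUnit Q.det)
    (a b : ℝ) (ha : 0 < a) (hab : a ≤ b)
    (hspec : ∀ i, hQ.eigenvalues i ∈ Set.Icc (-b) (-a) ∪ Set.Icc a b)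
    (v : Fin n → ℂ) (hv : v ≠ 0) (hvnorm : e2norm v = 1)
    (ω τ : Fin m → ℝ) (hω : ∀ i, 0 ≤ ω i) (hτpos : ∀ i, 0 < τ i) (hτmono : Monotone τ)
    (ε : ℝ) (hε : 0 < ε) (hε2 : ε ≤ 2)
    (hrat : ∀ t : ℝ, t ∈ Set.Icc (-b) (-a) ∪ Set.Icc a b →
      |Real.sign t - ∑ i, ω i * (t / (t ^ 2 + τ i))| ≤ ε / 2)
    (V : Matrix (Fin n) (Fin k) ℂ) (hVorth : Vᴴ * V = 1)
    (hV1 : V *ᵥ Pi.single (⟨0, hk⟩ : Fin k) 1 = (e2norm v : ℂ)⁻¹ • v)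
    (T : Matrix (Fin k) (Fin k) ℝ) (hTsym : T.IsHermitian)
    (hTtri : ∀ i j : Fin k, 1 < ((i : ℤ) - (j : ℤ)).natAbs → T i j = 0)
    (hTsub : ∀ (i : ℕ) (h : i + 1 < k), 0 < T ⟨i + 1, h⟩ ⟨i, Nat.lt_of_succ_lt h⟩)
    (βh : ℝ) (hβ : 0 < βh)
    (vh : Fin n → ℂ) (hvh : e2norm vh = 1) (hvhV : star vh ᵥ* V = 0)
    (hrel : Q ^ 2 * V = V * T.map (algebraMap ℝ ℂ) +
      (βh : ℂ) • vecMulVec vh (Pi.single (⟨k - 1, Nat.sub_lt hk one_pos⟩ : Fin k) 1))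
    (xk : Fin m → Fin n → ℂ)
    (hxk : ∀ i, xk i = (e2norm v : ℂ) •
      (V *ᵥ (((T + τ i • 1)⁻¹.map (algebraMap ℝ ℂ)) *ᵥ Pi.single (⟨0, hk⟩ : Fin k) 1)))
    (rk : Fin m → Fin n → ℂ)
    (hrk : ∀ i, rk i = v - (Q ^ 2 + (τ i : ℂ) • 1) *ᵥ xk i)
    (xsum : Fin n → ℂ)
    (hxsum : xsum = ∑ i, (ω i : ℂ) • (Q *ᵥ xk i))
    (hres : e2norm (rk ⟨0, hm⟩) ≤ ε / (2 + ε)) :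
    e2norm ((hQ.cfc Real.sign) *ᵥ v - xsum) ≤ ε := by
  classical
  rw [hvnorm] at hV1
  simp only [hvnorm, Complex.ofReal_one, one_smul] at hxk
  simp only [Complex.ofReal_one, inv_one, one_smul] at hV1
  have hdet := det_shift T (lanczos_posSemidef hQ hVorth hvhV hrel)
  obtain ⟨c, hc⟩ := adjugate_corner_const hk T hTtri
  set D : Fin m → ℝ := fun i => (T + τ i • (1 : Matrix (Fin k) (Fin k) ℝ)).det with hD
  have hDpos : ∀ i, 0 < D i := fun i => hdet.1 _ (hτpos i)
  -- Cramer's rule turns the last component of `y_i` into `c / D i`.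
  have hr : ∀ i, rk i = -(((βh * (c / D i) : ℝ) : ℂ) • vh) := by
    intro i
    have hmul : (T + τ i • (1 : Matrix (Fin k) (Fin k) ℝ)) *
        (T + τ i • (1 : Matrix (Fin k) (Fin k) ℝ))⁻¹ = 1 :=
      mul_nonsing_inv _ (hDpos i).ne'.isUnit
    have hmap : T.map (algebraMap ℝ ℂ) + (τ i : ℂ) • 1 =
        (T + τ i • (1 : Matrix (Fin k) (Fin k) ℝ)).map (algebraMap ℝ ℂ) := by
      ext p q
      by_cases hpq : p = q
      · subst hpq; simp
      · simp [hpq]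
    rw [hrk, hxk, residual_eq hrel hV1]
    · rw [mulVec_single_one, single_dotProduct, one_mul]
      have : (T + τ i • (1 : Matrix (Fin k) (Fin k) ℝ))⁻¹
          ⟨k - 1, Nat.sub_lt hk one_pos⟩ ⟨0, hk⟩ = c / D i := by
        rw [inv_def, Matrix.smul_apply, hc, Ring.inverse_eq_inv', smul_eq_mul, div_eq_inv_mul]
      simp [col_apply, this]
    · rw [hmap, mulVec_mulVec, ← Matrix.map_mul, hmul,
        Matrix.map_one _ (map_zero _) (map_one _), one_mulVec]
  set i0 : Fin m := ⟨0, hm⟩ with hi0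
  set ρ : Fin m → ℝ := fun i => D i0 / D i with hρ
  have hρ0 : ∀ i, 0 ≤ ρ i := fun i => div_nonneg (hDpos _).le (hDpos _).le
  have hρ1 : ∀ i, ρ i ≤ 1 := fun i => (div_le_one (hDpos i)).mpr
    (hdet.2 _ _ (hτpos _) (hτmono (Fin.mk_le_of_le_val (Nat.zero_le _))))
  have hrρ : ∀ i, rk i = (ρ i : ℂ) • rk i0 := by
    intro i
    rw [hr i, hr i0, smul_neg, smul_smul, ← Complex.ofReal_mul]
    congr 3
    have h1 := (hDpos i).ne'
    have h2 := (hDpos i0).ne'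
    simp only [hρ]
    field_simp
  set W : Matrix (Fin n) (Fin n) ℂ := (hQ.eigenvectorUnitary : Matrix (Fin n) (Fin n) ℂ)ᴴ with hWdef
  have hW : Wᴴ * W = 1 := by
    rw [hWdef, conjTranspose_conjTranspose]
    exact Unitary.coe_mul_star_self _
  set d := W *ᵥ v with hd
  set s := W *ᵥ rk i0 with hs
  set lam := hQ.eigenvalues with hlam
  have hden : ∀ i j, ((lam j : ℂ) ^ 2 + τ i) ≠ 0 := by
    intro i j
    have : lam j ^ 2 + τ i ≠ 0 := by have := hτpos i; positivity
    exact_mod_cast this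
  have hz : ∀ i j, (W *ᵥ xk i) j = (d j - ρ i * s j) / ((lam j : ℂ) ^ 2 + τ i) := by
    intro i j
    rw [eq_div_iff (hden i j)]
    have h1 := congrFun (congrArg (W *ᵥ ·) ((hrρ i).symm.trans (hrk i))) j
    simp only [mulVec_sub, mulVec_smul, add_mulVec, mulVec_add, pow_two, ← mulVec_mulVec,
      smul_mulVec, one_mulVec, Pi.sub_apply, Pi.add_apply, Pi.smul_apply, smul_eq_mul] at h1
    rw [mulVec_coord hQ, mulVec_coord hQ] at h1
    linear_combination h1
  set A : Fin n → ℝ := fun j =>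
    Real.sign (lam j) - ∑ i, ω i * (lam j / (lam j ^ 2 + τ i)) with hA
  set B : Fin n → ℝ := fun j => ∑ i, ω i * ρ i * (lam j / (lam j ^ 2 + τ i)) with hB
  have herr : W *ᵥ (hQ.cfc Real.sign *ᵥ v - xsum) =
      (fun j => (A j : ℂ) * d j) + fun j => (B j : ℂ) * s j := by
    ext j
    have hx : (W *ᵥ xsum) j = ∑ i, (ω i : ℂ) * (lam j * (W *ᵥ xk i) j) := by
      rw [hxsum, mulVec_sum, Finset.sum_apply]
      refine Finset.sum_congr rfl fun i _ => ?_
      rw [mulVec_smul, Pi.smul_apply, smul_eq_mul, mulVec_coord hQ]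
    rw [mulVec_sub, Pi.sub_apply, Pi.add_apply, cfc_coord hQ, hx]
    simp only [hz, hA, hB]
    push_cast
    rw [sub_mul, sub_add, Finset.sum_mul, Finset.sum_mul, ← Finset.sum_sub_distrib]
    congr 1
    refine Finset.sum_congr rfl fun i _ => ?_
    ring
  rw [← e2norm_isometry hW, herr]
  have hA' : e2norm (fun j => (A j : ℂ) * d j) ≤ ε / 2 * e2norm d := by
    refine e2norm_le_of_forall (by positivity) fun j => ?_
    rw [norm_mul, Complex.norm_real, Real.norm_eq_abs]
    exact mul_le_mul_of_nonneg_right (hrat _ (hspec j)) (norm_nonneg _)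
  have hB' : e2norm (fun j => (B j : ℂ) * s j) ≤ (1 + ε / 2) * e2norm s := by
    refine e2norm_le_of_forall (by positivity) fun j => ?_
    rw [norm_mul, Complex.norm_real, Real.norm_eq_abs]
    exact mul_le_mul_of_nonneg_right
      (weighted_sum_le hω hτpos hρ0 hρ1 (hrat _ (hspec j))) (norm_nonneg _)
  rw [hd, e2norm_isometry hW, hvnorm] at hA'
  rw [hs, e2norm_isometry hW] at hB'
  have hfin : (1 + ε / 2) * e2norm (rk i0) ≤ ε / 2 := by
    calc (1 + ε / 2) * e2norm (rk i0) ≤ (1 + ε / 2) * (ε / (2 + ε)) := by gcongr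
      _ = ε / 2 := by field_simp
  refine (e2norm_add_le _ _).trans ?_
  linarith
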